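/- arXiv:1905.00533 — 3 statements merged into one kernel-verified Lean document; each statement's English description precedes it below -/
import Mathlib

section
/- Let X be a positive integer and let b = (-1 + sqrt(4X+1))/2. Then the cardinality of S(X) equals ⌊b⌋ + ⌊X/⌊b+1⌋⌋, i.e. |S(X)| = ⌊b⌋ + ⌊X/(⌊b⌋+1)⌋. -/
/-!
Put `k = ⌊b⌋`, so that `k (k + 1) ≤ X < (k + 1) (k + 2)`, and `q = X / (k + 1)`. As long as
`n (n + 1) ≤ X`, consecutive quotients differ: `X / (n + 1) < X / n`. Hence `n = 1, …, k` give `k`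
distinct values, all larger than `q`. The remaining `n` give values in `[1, q]`, and each `m` in
`[1, q]` is attained: `q ≤ k + 1`, so either `m ≤ k` and `m = X / (X / m)`, or
`m = q = X / (k + 1)`.
-/

lemma div_lt_div_of_mul_succ_le {X a c : ℕ} (ha : 1 ≤ a) (hac : a < c)
    (h : a * (a + 1) ≤ X) : X / c < X / a := by
  have h1 : X / c ≤ X / (a + 1) := Nat.div_le_div_left hac (by omega)
  have h2 : a ≤ X / (a + 1) := (Nat.le_div_iff_mul_le (by omega)).2 h
  have h3 : X / (a + 1) * (a + 1) ≤ X := Nat.div_mul_le_self _ _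
  have h4 : X / (a + 1) + 1 ≤ X / a := (Nat.le_div_iff_mul_le (by omega)).2 (by nlinarith)
  omega

lemma div_div_self_of_mul_succ_le {X m : ℕ} (hm : 1 ≤ m) (h : m * (m + 1) ≤ X) :
    X / (X / m) = m := by
  have h1 : m + 1 ≤ X / m := (Nat.le_div_iff_mul_le (by omega)).2 (by nlinarith)
  have h2 : X / m * m ≤ X := Nat.div_mul_le_self _ _
  have h3 : X < X / m * m + m := Nat.lt_div_mul_add (by omega)
  exact Nat.div_eq_of_lt_le (by nlinarith) (by nlinarith)

lemma card_image_div {X k : ℕ} (hX : 0 < X) (h1 : k * (k + 1) ≤ X)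
    (h2 : X < (k + 1) * (k + 2)) :
    ((Finset.Icc 1 X).image (fun n => X / n)).card = k + X / (k + 1) := by
  have hle : ∀ a, a ≤ k → a * (a + 1) ≤ X := fun a ha =>
    (Nat.mul_le_mul ha (by omega)).trans h1
  have hq : X / (k + 1) < k + 2 := (Nat.div_lt_iff_lt_mul (by omega)).2 (by nlinarith)
  have hkX : k + 1 ≤ X := by
    rcases Nat.eq_zero_or_pos k with h | h
    · omega
    · nlinarith
  have hset : (Finset.Icc 1 X).image (fun n => X / n) =
      (Finset.Icc 1 k).image (fun n => X / n) ∪ Finset.Icc 1 (X / (k + 1)) := by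
    ext m
    simp only [Finset.mem_image, Finset.mem_union, Finset.mem_Icc]
    constructor
    · rintro ⟨n, ⟨hn1, hnX⟩, rfl⟩
      by_cases hn : n ≤ k
      · exact Or.inl ⟨n, ⟨hn1, hn⟩, rfl⟩
      · exact Or.inr ⟨Nat.div_pos hnX hn1, Nat.div_le_div_left (by omega) (by omega)⟩
    · rintro (⟨n, ⟨hn1, hn⟩, rfl⟩ | ⟨hm1, hm⟩)
      · exact ⟨n, ⟨hn1, by omega⟩, rfl⟩
      · by_cases hmk : m ≤ k
        · exact ⟨X / m, ⟨Nat.div_pos (by omega) hm1, Nat.div_le_self _ _⟩,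
            div_div_self_of_mul_succ_le hm1 (hle m hmk)⟩
        · exact ⟨k + 1, ⟨by omega, hkX⟩, by omega⟩
  have hdisj : Disjoint ((Finset.Icc 1 k).image (fun n => X / n))
      (Finset.Icc 1 (X / (k + 1))) := by
    rw [Finset.disjoint_left]
    intro m hm hm'
    simp only [Finset.mem_image, Finset.mem_Icc] at hm hm'
    obtain ⟨n, ⟨hn1, hn⟩, rfl⟩ := hm
    have := div_lt_div_of_mul_succ_le hn1 (show n < k + 1 by omega) (hle n hn)
    omega
  have hinj : Set.InjOn (fun n => X / n) (Finset.Icc 1 k : Finset ℕ) := by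
    intro a ha c hc hac
    simp only [Finset.coe_Icc, Set.mem_Icc] at ha hc hac
    rcases lt_trichotomy a c with h | h | h
    · have := div_lt_div_of_mul_succ_le ha.1 h (hle a ha.2)
      omega
    · exact h
    · have := div_lt_div_of_mul_succ_le hc.1 h (hle c hc.2)
      omega
  rw [hset, Finset.card_union_of_disjoint hdisj, Finset.card_image_of_injOn hinj]
  simp

/-- For a positive integer `X`, with `b = (-1 + √(4X+1))/2`, the set
`S(X) = {⌊X/n⌋ : 1 ≤ n ≤ X}` has cardinality `⌊b⌋ + ⌊X/(⌊b⌋+1)⌋`. -/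
theorem card_floor_set (X : ℕ) (hX : 0 < X) (b : ℝ)
    (hb : b = (-1 + Real.sqrt (4 * X + 1)) / 2) :
    ((Finset.Icc 1 X).image (fun n => X / n)).card = ⌊b⌋₊ + X / (⌊b⌋₊ + 1) := by
  have hs : Real.sqrt (4 * X + 1) ^ 2 = 4 * X + 1 := Real.sq_sqrt (by positivity)
  have hs1 : 1 ≤ Real.sqrt (4 * X + 1) := Real.one_le_sqrt.2 (by
    have : (0 : ℝ) ≤ X := by positivity
    linarith)
  have hb0 : 0 ≤ b := by rw [hb]; linarith
  have hbX : b * (b + 1) = X := by rw [hb]; linarith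
  have hf1 : (⌊b⌋₊ : ℝ) ≤ b := Nat.floor_le hb0
  have hf2 : b < ⌊b⌋₊ + 1 := Nat.lt_floor_add_one b
  have hf0 : (0 : ℝ) ≤ ⌊b⌋₊ := by positivity
  apply card_image_div hX
  · have : (⌊b⌋₊ : ℝ) * (⌊b⌋₊ + 1) ≤ X := by nlinarith
    exact_mod_cast this
  · have : (X : ℝ) < (⌊b⌋₊ + 1) * (⌊b⌋₊ + 2) := by nlinarith
    exact_mod_cast this
end

section
/- Let X and d be positive integers with 2 ≤ d ≤ X. Then |S_d(X)| ≥ sqrt(X)/d − 3. -/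
/-! Every positive `m ≤ √X` is a floor quotient, namely `m = ⌊X / ⌊X / m⌋⌋`. Hence the set contains
all multiples `d, 2d, …, Kd` with `K = ⌊⌊√X⌋ / d⌋`, and `√X < ⌊√X⌋ + 1 ≤ d (K + 1)`, so it even has
at least `√X / d - 1` elements. -/

theorem div_div_self_of_sq_le {X m : ℕ} (hm : 0 < m) (h : m * m ≤ X) : X / (X / m) = m := by
  have hle : m ≤ X / m := (Nat.le_div_iff_mul_le hm).2 h
  have h1 : X / m * m ≤ X := Nat.div_mul_le_self X m
  have h2 : X < m * (X / m + 1) := Nat.lt_mul_div_succ X hm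
  apply Nat.div_eq_of_lt_le
  · nlinarith
  · nlinarith

/-- For positive integers `X, d` with `2 ≤ d ≤ X`, the set
`S_d(X) = {m = ⌊X/n⌋ for some 1 ≤ n ≤ X, d ∣ m}` satisfies `|S_d(X)| ≥ √X/d - 3`. -/
theorem card_floor_set_div_lower (X d : ℕ) (hd : 2 ≤ d) (hdX : d ≤ X) :
    Real.sqrt X / d - 3 ≤
      (((((Finset.Icc 1 X).image (fun n => X / n))).filter (fun m => d ∣ m)).card : ℝ) := by
  have hd0 : 0 < d := by omega
  have hsub : (Finset.Icc 1 (X.sqrt / d)).image (fun k => d * k) ⊆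
      ((Finset.Icc 1 X).image (fun n => X / n)).filter (fun m => d ∣ m) := by
    intro m hm
    obtain ⟨k, hk, rfl⟩ := Finset.mem_image.1 hm
    obtain ⟨hk1, hk2⟩ := Finset.mem_Icc.1 hk
    have hpos : 0 < d * k := Nat.mul_pos hd0 hk1
    have hs : d * k ≤ X.sqrt := by
      rw [mul_comm]
      exact (Nat.le_div_iff_mul_le hd0).1 hk2
    have hsq : d * k * (d * k) ≤ X := Nat.le_sqrt.1 hs
    refine Finset.mem_filter.2 ⟨Finset.mem_image.2 ⟨X / (d * k), Finset.mem_Icc.2 ⟨?_, ?_⟩,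
      div_div_self_of_sq_le hpos hsq⟩, dvd_mul_right d k⟩
    · exact hpos.trans_le ((Nat.le_div_iff_mul_le hpos).2 hsq)
    · exact Nat.div_le_self _ _
  have hcard := Finset.card_le_card hsub
  rw [Finset.card_image_of_injective _ (fun a b h => Nat.eq_of_mul_eq_mul_left hd0 h),
    Nat.card_Icc, Nat.add_sub_cancel] at hcard
  have hlt : X.sqrt + 1 ≤ d * (X.sqrt / d + 1) := Nat.lt_mul_div_succ _ hd0
  have hsqrt : Real.sqrt X ≤ X.sqrt + 1 := Real.real_sqrt_le_nat_sqrt_succ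
  have hltR : (X.sqrt : ℝ) + 1 ≤ d * (((X.sqrt / d : ℕ) : ℝ) + 1) := by exact_mod_cast hlt
  have hdR : (0 : ℝ) < d := by exact_mod_cast hd0
  have hdiv : Real.sqrt X / d ≤ ((X.sqrt / d : ℕ) : ℝ) + 1 := by
    rw [div_le_iff₀ hdR]
    linarith
  have hcardR := (Nat.cast_le (α := ℝ)).2 hcard
  linarith
end

section
/- Let X be a positive integer and let b = (-1 + sqrt(4X+1))/2. Let S_1(X) = {1, 2, …, ⌊b⌋} and S_2(X) = { ⌊X/n⌋ : 1 ≤ n ≤ ⌊b⌋ + 1 }. Then S_1(X) ∩ S_2(X) has at most one element, and |S_1(X) ∩ S_2(X)| = 1 − ( ⌊X/(⌊b⌋+1)⌋ − ⌊b⌋ ); in particular the intersection is nonempty if and only if ⌊X/(⌊b⌋+1)⌋ = ⌊b⌋. -/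
/-!
Put `k = ⌊b⌋`. Since `b` is the positive root of `b (b + 1) = X`, we have
`k (k + 1) ≤ X < (k + 1) (k + 2)`, so `q = X / (k + 1)` is `k` or `k + 1`. As `n ↦ X / n` is
antitone, `q` is the least element of `S₂`, whereas `k` is the greatest element of `S₁`. So the
intersection is `{k}` when `q = k` (here `k ≥ 1`, because `k = 0` forces `X = 1` and `q = 1`),
and it is empty when `q = k + 1`.
-/

lemma floor_root_bounds (X : ℕ) (b : ℝ)
    (hb : b = (-1 + Real.sqrt (4 * X + 1)) / 2) :
    ⌊b⌋₊ * (⌊b⌋₊ + 1) ≤ X ∧ X < (⌊b⌋₊ + 1) * (⌊b⌋₊ + 2) := by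
  have hX0 : (0 : ℝ) ≤ X := Nat.cast_nonneg X
  have hsq : Real.sqrt (4 * X + 1) ^ 2 = 4 * X + 1 := Real.sq_sqrt (by linarith)
  have hs1 : 1 ≤ Real.sqrt (4 * X + 1) := Real.one_le_sqrt.mpr (by linarith)
  have hb0 : 0 ≤ b := by rw [hb]; linarith
  have hroot : b * (b + 1) = X := by rw [hb]; nlinarith
  have hle : (⌊b⌋₊ : ℝ) ≤ b := Nat.floor_le hb0
  have hlt : b < ⌊b⌋₊ + 1 := Nat.lt_floor_add_one b
  have hk0 : (0 : ℝ) ≤ ⌊b⌋₊ := Nat.cast_nonneg _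
  constructor
  · have h : (⌊b⌋₊ : ℝ) * (⌊b⌋₊ + 1) ≤ X := by rw [← hroot]; gcongr
    exact_mod_cast h
  · have h : (X : ℝ) < (⌊b⌋₊ + 1) * (⌊b⌋₊ + 2) := by rw [← hroot]; nlinarith
    exact_mod_cast h

/-- For positive `X` with `b = (-1 + √(4X+1))/2`, with `S₁(X) = {1, …, ⌊b⌋}` and
`S₂(X) = {⌊X/n⌋ : 1 ≤ n ≤ ⌊b⌋+1}`, the intersection has at most one element,
`|S₁(X) ∩ S₂(X)| = 1 - (⌊X/(⌊b⌋+1)⌋ - ⌊b⌋)`, and it is nonempty iff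
`⌊X/(⌊b⌋+1)⌋ = ⌊b⌋`. -/
theorem S1_inter_S2 (X : ℕ) (hX : 0 < X) (b : ℝ)
    (hb : b = (-1 + Real.sqrt (4 * X + 1)) / 2) :
    (Finset.Icc 1 ⌊b⌋₊ ∩ (Finset.Icc 1 (⌊b⌋₊ + 1)).image (fun n => X / n)).card ≤ 1 ∧
    ((Finset.Icc 1 ⌊b⌋₊ ∩ (Finset.Icc 1 (⌊b⌋₊ + 1)).image (fun n => X / n)).card : ℤ) =
      1 - ((X / (⌊b⌋₊ + 1) : ℕ) - (⌊b⌋₊ : ℤ)) ∧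
    ((Finset.Icc 1 ⌊b⌋₊ ∩ (Finset.Icc 1 (⌊b⌋₊ + 1)).image (fun n => X / n)).Nonempty ↔
      X / (⌊b⌋₊ + 1) = ⌊b⌋₊) := by
  obtain ⟨hlow, hupp⟩ := floor_root_bounds X b hb
  generalize ⌊b⌋₊ = k at *
  have hq_ge : k ≤ X / (k + 1) := (Nat.le_div_iff_mul_le k.succ_pos).mpr hlow
  have hq_lt : X / (k + 1) < k + 2 :=
    (Nat.div_lt_iff_lt_mul k.succ_pos).mpr (by rwa [mul_comm])
  have hmin : ∀ n ∈ Finset.Icc 1 (k + 1), X / (k + 1) ≤ X / n := by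
    intro n hn
    rw [Finset.mem_Icc] at hn
    exact Nat.div_le_div_left hn.2 hn.1
  rcases (by omega : X / (k + 1) = k ∨ X / (k + 1) = k + 1) with hq | hq
  · have hk : 1 ≤ k := by
      rcases Nat.eq_zero_or_pos k with rfl | h
      · simp at hq; omega
      · exact h
    have hS : Finset.Icc 1 k ∩ (Finset.Icc 1 (k + 1)).image (fun n => X / n) = {k} := by
      ext v
      simp only [Finset.mem_inter, Finset.mem_image, Finset.mem_singleton]
      constructor
      · rintro ⟨hv, n, hn, rfl⟩
        have := hmin n hn
        rw [Finset.mem_Icc] at hv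
        omega
      · rintro rfl
        exact ⟨by simp [hk], v + 1, by simp, hq⟩
    rw [hS, hq]
    simp
  · have hS : Finset.Icc 1 k ∩ (Finset.Icc 1 (k + 1)).image (fun n => X / n) = ∅ := by
      ext v
      simp only [Finset.mem_inter, Finset.mem_image, Finset.notMem_empty, iff_false]
      rintro ⟨hv, n, hn, rfl⟩
      have := hmin n hn
      rw [Finset.mem_Icc] at hv
      omega
    rw [hS, hq]
    simp
end
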